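/- Let 0<α≤1, let {q_n : n≥0} be a non-increasing sequence of non-negative reals with q_0>0 satisfying n^α/Q_n = O(1) and (q_n − q_{n+1})/n^{α−2} = O(1) as n→∞, and let a be a 1/(1+α)-atom with support I_N (so ‖a‖_∞ ≤ M_N^{1+α} and ∫_{I_N} a dμ = 0). Then there exists a constant c_α such that for every n > M_N: (i) |t_n a(x)| ≤ c_α M_l^α M_k M_N^α / n^α for x ∈ I_{l+1}(s_k e_k + s_l e_l) with 0 ≤ k < l < N, 1 ≤ s_k ≤ m_k−1, 1 ≤ s_l ≤ m_l−1; and (ii) |t_n a(x)| ≤ c_α M_k M_N^α for x ∈ I_N(s_k e_k) with 0 ≤ k < N, 1 ≤ s_k ≤ m_k−1. -/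

import Mathlib

open MeasureTheory Filter Finset Asymptotics
open scoped ENNReal NNReal

noncomputable section

namespace Vilenkin

/-- The Vilenkin group `G_m`: the complete direct product of the cyclic groups `Z_{m_n}`. -/
abbrev G (m : ℕ → ℕ) := ∀ n, ZMod (m n)

/-- The generalized number system `M_0 = 1`, `M_{n+1} = m_n M_n`. -/
def MM (m : ℕ → ℕ) : ℕ → ℕ
  | 0 => 1
  | n + 1 => m n * MM m n

/-- The generalized Rademacher functions `r_k(x) = exp(2 π i x_k / m_k)`. -/
def rade (m : ℕ → ℕ) (k : ℕ) (x : G m) : ℂ :=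
  Complex.exp (2 * Real.pi * Complex.I * ((x k).val : ℂ) / (m k : ℂ))

/-- The Vilenkin system `ψ_n = ∏_k r_k^{n_k}`, where `n = ∑_k n_k M_k` is the expansion of `n`
in the generalized number system (the digits `n_k = (n / M_k) mod m_k` vanish for `k > n`). -/
def psi (m : ℕ → ℕ) (n : ℕ) (x : G m) : ℂ :=
  ∏ k ∈ Finset.range (n + 1), rade m k x ^ (n / MM m k % m k)

/-- The Dirichlet kernels `D_n = ∑_{k=0}^{n-1} ψ_k`. -/
def D (m : ℕ → ℕ) (n : ℕ) (x : G m) : ℂ := ∑ k ∈ Finset.range n, psi m k x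

/-- The Fejér kernels `K_n = (1/n) ∑_{k=1}^{n} D_k`. -/
def K (m : ℕ → ℕ) (n : ℕ) (x : G m) : ℂ := (n : ℂ)⁻¹ * ∑ k ∈ Finset.Icc 1 n, D m k x

/-- `Q_n = ∑_{k=0}^{n-1} q_k`. -/
def Q (q : ℕ → ℝ) (n : ℕ) : ℝ := ∑ k ∈ Finset.range n, q k

/-- The Nörlund kernels `F_n = (1/Q_n) ∑_{k=1}^{n} q_{n-k} D_k`. -/
def F (m : ℕ → ℕ) (q : ℕ → ℝ) (n : ℕ) (x : G m) : ℂ :=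
  ((Q q n : ℝ) : ℂ)⁻¹ * ∑ k ∈ Finset.Icc 1 n, (q (n - k) : ℂ) * D m k x

/-- The interval (cylinder) `I_n(x) = {y : y_j = x_j for all j < n}`. -/
def cyl (m : ℕ → ℕ) (n : ℕ) (x : G m) : Set (G m) := {y | ∀ j < n, y j = x j}

/-- The element `s_k e_k` of `G_m` (value `s_k` in coordinate `k`, zero elsewhere). -/
def oneSpike (m : ℕ → ℕ) (k sk : ℕ) : G m := fun j => if j = k then (sk : ZMod (m j)) else 0

/-- The element `s_k e_k + s_l e_l` of `G_m` (for `k ≠ l`). -/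
def twoSpike (m : ℕ → ℕ) (k sk l sl : ℕ) : G m :=
  fun j => if j = k then (sk : ZMod (m j)) else if j = l then (sl : ZMod (m j)) else 0

/-- The σ-algebra `𝔉_n` generated by the intervals `I_n(x)`, i.e. by the first `n`
coordinates. -/
def filt (m : ℕ → ℕ) (n : ℕ) : MeasurableSpace (G m) :=
  MeasurableSpace.comap (fun x (i : Fin n) => x i.val) inferInstance

/-- `f = (f^{(n)})` is a martingale with respect to the filtration `(𝔉_n)` and the measure `μ`. -/
def IsMartingale (m : ℕ → ℕ) (μ : Measure (G m)) (f : ℕ → G m → ℂ) : Prop :=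
  (∀ n, Integrable (f n) μ) ∧ (∀ n, Measurable[filt m n] (f n)) ∧
    ∀ n, ∀ s : Set (G m), MeasurableSet[filt m n] s →
      ∫ x in s, f (n + 1) x ∂μ = ∫ x in s, f n x ∂μ

/-- The `L_p`-quasinorm `(∫ g^p dμ)^{1/p}` of a nonnegative (extended-real-valued) function. -/
def lpNormE (m : ℕ → ℕ) (μ : Measure (G m)) (p : ℝ) (g : G m → ℝ≥0∞) : ℝ≥0∞ :=
  (∫⁻ x, g x ^ p ∂μ) ^ (1 / p)

/-- The martingale Hardy space quasinorm `‖f‖_{H_p} = ‖sup_n |f^{(n)}|‖_p`. -/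
def HpNorm (m : ℕ → ℕ) (μ : Measure (G m)) (p : ℝ) (f : ℕ → G m → ℂ) : ℝ≥0∞ :=
  lpNormE m μ p (fun x => ⨆ n, (‖f n x‖₊ : ℝ≥0∞))

/-- The Vilenkin-Fourier coefficients of a martingale:
`f̂(i) = lim_k ∫ f^{(k)} conj ψ_i dμ`. -/
def mcoef (m : ℕ → ℕ) (μ : Measure (G m)) (f : ℕ → G m → ℂ) (i : ℕ) : ℂ :=
  limUnder atTop fun k => ∫ x, f k x * (starRingEnd ℂ) (psi m i x) ∂μ

/-- The partial sums `S_n f = ∑_{k=0}^{n-1} f̂(k) ψ_k` of the Vilenkin-Fourier series of a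
martingale. -/
def mS (m : ℕ → ℕ) (μ : Measure (G m)) (f : ℕ → G m → ℂ) (n : ℕ) (x : G m) : ℂ :=
  ∑ k ∈ Finset.range n, mcoef m μ f k * psi m k x

/-- The Nörlund means `t_n f = (1/Q_n) ∑_{k=1}^{n} q_{n-k} S_k f` of a martingale. -/
def mT (m : ℕ → ℕ) (q : ℕ → ℝ) (μ : Measure (G m)) (f : ℕ → G m → ℂ) (n : ℕ) (x : G m) : ℂ :=
  ((Q q n : ℝ) : ℂ)⁻¹ * ∑ k ∈ Finset.Icc 1 n, (q (n - k) : ℂ) * mS m μ f k x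

/-- The Cesàro numbers `A_0^α = 0`, `A_n^α = (α+1)⋯(α+n)/n!`. -/
def AC (α : ℝ) (n : ℕ) : ℝ :=
  if n = 0 then 0 else (∏ j ∈ Finset.Icc 1 n, (α + (j : ℝ))) / (n.factorial : ℝ)

/-- The `(C,α)` (Cesàro) means `σ_n^α f = (1/A_n^α) ∑_{k=1}^{n} A_{n-k}^{α-1} S_k f` of a
martingale. -/
def mCes (m : ℕ → ℕ) (α : ℝ) (μ : Measure (G m)) (f : ℕ → G m → ℂ) (n : ℕ) (x : G m) : ℂ :=
  ((AC α n : ℝ) : ℂ)⁻¹ * ∑ k ∈ Finset.Icc 1 n, ((AC (α - 1) (n - k) : ℝ) : ℂ) * mS m μ f k x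

/-- The Fejér means `σ_n f = (1/n) ∑_{k=1}^{n} S_k f` of a martingale. -/
def mFej (m : ℕ → ℕ) (μ : Measure (G m)) (f : ℕ → G m → ℂ) (n : ℕ) (x : G m) : ℂ :=
  (n : ℂ)⁻¹ * ∑ k ∈ Finset.Icc 1 n, mS m μ f k x

/-- The Vilenkin-Fourier coefficients of an integrable function. -/
def fcoef (m : ℕ → ℕ) (μ : Measure (G m)) (g : G m → ℂ) (i : ℕ) : ℂ :=
  ∫ x, g x * (starRingEnd ℂ) (psi m i x) ∂μ

/-- The partial sums of the Vilenkin-Fourier series of an integrable function. -/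
def fS (m : ℕ → ℕ) (μ : Measure (G m)) (g : G m → ℂ) (n : ℕ) (x : G m) : ℂ :=
  ∑ k ∈ Finset.range n, fcoef m μ g k * psi m k x

/-- The Nörlund means of an integrable function. -/
def fT (m : ℕ → ℕ) (q : ℕ → ℝ) (μ : Measure (G m)) (g : G m → ℂ) (n : ℕ) (x : G m) : ℂ :=
  ((Q q n : ℝ) : ℂ)⁻¹ * ∑ k ∈ Finset.Icc 1 n, (q (n - k) : ℂ) * fS m μ g k x


lemma rade_eq (m : ℕ → ℕ) (hm : ∀ n, 2 ≤ m n) (k : ℕ) (x : G m) :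
    haveI : NeZero (m k) := ⟨by have := hm k; omega⟩
    rade m k x = ((ZMod.toCircle (x k) : Circle) : ℂ) := by
  have : NeZero (m k) := ⟨by have := hm k; omega⟩
  rw [ZMod.toCircle_apply]; rfl

lemma rade_norm (m : ℕ → ℕ) (hm : ∀ n, 2 ≤ m n) (k : ℕ) (x : G m) : ‖rade m k x‖ = 1 := by
  rw [rade_eq m hm]; exact Circle.norm_coe _

lemma rade_zero (m : ℕ → ℕ) (k : ℕ) (x : G m) (h : x k = 0) : rade m k x = 1 := by
  simp [rade, h]

lemma rade_congr (m : ℕ → ℕ) (k : ℕ) (x y : G m) (h : x k = y k) : rade m k x = rade m k y := by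
  simp [rade, h]

lemma rade_sub (m : ℕ → ℕ) (hm : ∀ n, 2 ≤ m n) (k : ℕ) (x t : G m) :
    rade m k (x - t) = rade m k x * (starRingEnd ℂ) (rade m k t) := by
  have : NeZero (m k) := ⟨by have := hm k; omega⟩
  rw [rade_eq m hm, rade_eq m hm, rade_eq m hm, Pi.sub_apply, AddChar.map_sub_eq_div]
  rw [div_eq_mul_inv, Circle.coe_mul, Circle.coe_inv_eq_conj]

lemma rade_pow (m : ℕ → ℕ) (hm : ∀ n, 2 ≤ m n) (k : ℕ) (x : G m) : rade m k x ^ (m k) = 1 := by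
  have : NeZero (m k) := ⟨by have := hm k; omega⟩
  rw [rade_eq m hm, ← Circle.coe_pow, ← AddChar.map_nsmul_eq_pow]
  simp

lemma rade_ne_one (m : ℕ → ℕ) (hm : ∀ n, 2 ≤ m n) (k : ℕ) (x : G m) (h : x k ≠ 0) :
    rade m k x ≠ 1 := by
  have : NeZero (m k) := ⟨by have := hm k; omega⟩
  rw [rade_eq m hm]
  intro h1
  apply h
  apply ZMod.injective_toCircle
  rw [AddChar.map_zero_eq_one]
  exact Circle.coe_eq_one.mp h1

lemma rade_geom (m : ℕ → ℕ) (hm : ∀ n, 2 ≤ m n) (k : ℕ) (x : G m) (h : x k ≠ 0) :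
    ∑ u ∈ range (m k), rade m k x ^ u = 0 := by
  have h1 := mul_neg_geom_sum (rade m k x) (m k)
  rw [rade_pow m hm, sub_self] at h1
  rcases mul_eq_zero.mp h1 with h2 | h2
  · exact absurd (sub_eq_zero.mp h2).symm (rade_ne_one m hm k x h)
  · exact h2

lemma MM_pos (m : ℕ → ℕ) (hm : ∀ n, 2 ≤ m n) (k : ℕ) : 0 < MM m k := by
  induction k with
  | zero => simp [MM]
  | succ k ih => have := hm k; simp only [MM]; positivity

lemma MM_dvd (m : ℕ → ℕ) (i j : ℕ) (h : i ≤ j) : MM m i ∣ MM m j := by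
  induction j, h using Nat.le_induction with
  | base => exact dvd_rfl
  | succ j _ ih => simp only [MM]; exact ih.mul_left _

lemma MM_mono (m : ℕ → ℕ) (hm : ∀ n, 2 ≤ m n) (i j : ℕ) (h : i ≤ j) : MM m i ≤ MM m j :=
  Nat.le_of_dvd (MM_pos m hm j) (MM_dvd m i j h)

lemma lt_MM (m : ℕ → ℕ) (hm : ∀ n, 2 ≤ m n) (k : ℕ) : k < MM m k := by
  induction k with
  | zero => simp [MM]
  | succ k ih => have := hm k; simp only [MM]; nlinarith

/-- digits -/
def dg (m : ℕ → ℕ) (n k : ℕ) : ℕ := n / MM m k % m k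

lemma dg_high (m : ℕ → ℕ) (n k : ℕ) (h : n < MM m k) : dg m n k = 0 := by
  simp [dg, Nat.div_eq_of_lt h]

lemma dg_low (m : ℕ → ℕ) (hm : ∀ n, 2 ≤ m n) (b K j : ℕ) (h : j < K) :
    dg m (b * MM m K) j = 0 := by
  obtain ⟨c, hc⟩ := MM_dvd m (j + 1) K h
  have hp := MM_pos m hm j
  simp only [dg, hc, MM]
  have : b * (m j * MM m j * c) = (b * c * m j) * MM m j := by ring
  rw [this, Nat.mul_div_cancel _ hp, Nat.mul_mod_left]

lemma dg_add (m : ℕ → ℕ) (hm : ∀ n, 2 ≤ m n) (b K r j : ℕ) (hr : r < MM m K) :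
    dg m (b * MM m K + r) j = dg m (b * MM m K) j + dg m r j := by
  have hp := MM_pos m hm j
  rcases lt_or_ge j K with h | h
  · rw [dg_low m hm b K j h, zero_add]
    obtain ⟨c, hc⟩ := MM_dvd m (j + 1) K h
    simp only [dg, hc, MM]
    have : b * (m j * MM m j * c) + r = r + MM m j * (m j * (b * c)) := by ring
    rw [this, Nat.add_mul_div_left _ _ hp, Nat.add_mul_mod_self_left]
  · rw [dg_high m r j (hr.trans_le (MM_mono m hm K j h)), add_zero]
    obtain ⟨c, hc⟩ := MM_dvd m K j h
    have hK := MM_pos m hm K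
    simp only [dg, hc]
    rw [← Nat.div_div_eq_div_mul, ← Nat.div_div_eq_div_mul]
    rw [Nat.mul_div_cancel _ hK, add_comm, Nat.add_mul_div_right _ _ hK, Nat.div_eq_of_lt hr,
      zero_add]

lemma psi_eq (m : ℕ → ℕ) (hm : ∀ n, 2 ≤ m n) (n R : ℕ) (h : n < R) (x : G m) :
    psi m n x = ∏ k ∈ range R, rade m k x ^ dg m n k := by
  rw [psi]
  apply Finset.prod_subset
  · intro i; simp; omega
  · intro i _ hi
    have : n < i := by simp at hi; omega
    have h2 := dg_high m n i (this.trans (lt_MM m hm i))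
    simp only [dg] at h2
    rw [h2, pow_zero]

lemma psi_norm (m : ℕ → ℕ) (hm : ∀ n, 2 ≤ m n) (n : ℕ) (x : G m) : ‖psi m n x‖ = 1 := by
  simp [psi, norm_prod, rade_norm m hm]

lemma psi_sub (m : ℕ → ℕ) (hm : ∀ n, 2 ≤ m n) (n : ℕ) (x t : G m) :
    psi m n (x - t) = psi m n x * (starRingEnd ℂ) (psi m n t) := by
  simp only [psi, rade_sub m hm, mul_pow, prod_mul_distrib, map_prod, map_pow]

lemma psi_add (m : ℕ → ℕ) (hm : ∀ n, 2 ≤ m n) (b K r : ℕ) (hr : r < MM m K) (x : G m) :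
    psi m (b * MM m K + r) x = psi m (b * MM m K) x * psi m r x := by
  rw [psi_eq m hm _ (b * MM m K + r + 1) (by omega), psi_eq m hm (b * MM m K) (b * MM m K + r + 1)
    (by omega), psi_eq m hm r (b * MM m K + r + 1) (by omega), ← prod_mul_distrib]
  apply prod_congr rfl
  intro j _
  rw [dg_add m hm b K r j hr, pow_add]

lemma psi_congr_high (m : ℕ → ℕ) (hm : ∀ n, 2 ≤ m n) (b K : ℕ) (x y : G m)
    (h : ∀ j, K ≤ j → x j = y j) : psi m (b * MM m K) x = psi m (b * MM m K) y := by
  simp only [psi]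
  apply prod_congr rfl
  intro j _
  rcases lt_or_ge j K with h1 | h1
  · have := dg_low m hm b K j h1
    simp only [dg] at this
    rw [this]; simp
  · rw [rade_congr m j x y (h j h1)]

lemma psi_low_one (m : ℕ → ℕ) (hm : ∀ n, 2 ≤ m n) (r K : ℕ) (hr : r < MM m K) (x : G m)
    (h : ∀ j < K, x j = 0) : psi m r x = 1 := by
  simp only [psi]
  apply prod_eq_one
  intro j _
  rcases lt_or_ge j K with h1 | h1
  · rw [rade_zero m j x (h j h1), one_pow]
  · have := dg_high m r j (hr.trans_le (MM_mono m hm K j h1))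
    simp only [dg] at this
    rw [this]; simp

lemma psi_single (m : ℕ → ℕ) (hm : ∀ n, 2 ≤ m n) (u k : ℕ) (hu : u < m k) (x : G m)
    (h : ∀ j < k, x j = 0) : psi m (u * MM m k) x = rade m k x ^ u := by
  have hp := MM_pos m hm k
  have hd : dg m (u * MM m k) k = u := by
    simp only [dg]; rw [Nat.mul_div_cancel _ hp, Nat.mod_eq_of_lt hu]
  rw [psi_eq m hm _ (u * MM m k + k + 1) (by omega), prod_eq_single k]
  · rw [hd]
  · intro j _ hj
    rcases lt_or_gt_of_ne hj with h1 | h1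
    · rw [rade_zero m j x (h j h1), one_pow]
    · rw [dg_high, pow_zero]
      refine lt_of_lt_of_le ?_ (MM_mono m hm (k+1) j h1)
      simp only [MM]
      exact Nat.mul_lt_mul_of_pos_right hu hp
  · intro h2; exact absurd (mem_range.mpr (by omega)) h2

lemma sum_blocks (g : ℕ → ℂ) (L b : ℕ) :
    ∑ i ∈ range (b * L), g i = ∑ c ∈ range b, ∑ r ∈ range L, g (c * L + r) := by
  induction b with
  | zero => simp
  | succ b ih => rw [Nat.succ_mul, sum_range_add, ih, sum_range_succ]

lemma D_full (m : ℕ → ℕ) (hm : ∀ n, 2 ≤ m n) (k : ℕ) (x : G m)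
    (h : ∀ j < k, x j = 0) (hk : x k ≠ 0) : D m (MM m (k + 1)) x = 0 := by
  simp only [D, MM]
  rw [sum_blocks]
  have : ∀ c ∈ range (m k), ∑ r ∈ range (MM m k), psi m (c * MM m k + r) x
      = (MM m k : ℂ) * rade m k x ^ c := by
    intro c hc
    rw [sum_congr rfl (g := fun _ => rade m k x ^ c)]
    · simp
    · intro r hr
      rw [psi_add m hm c k r (mem_range.mp hr), psi_single m hm c k (mem_range.mp hc) x h,
        psi_low_one m hm r k (mem_range.mp hr) x h, mul_one]
  rw [sum_congr rfl this, ← mul_sum, rade_geom m hm k x hk, mul_zero]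

lemma D_block (m : ℕ → ℕ) (hm : ∀ n, 2 ≤ m n) (k : ℕ) (x : G m)
    (h : ∀ j < k, x j = 0) (hk : x k ≠ 0) (b r : ℕ) (hr : r ≤ MM m (k + 1)) :
    D m (b * MM m (k + 1) + r) x = psi m (b * MM m (k + 1)) x * D m r x := by
  have key : ∀ c s, s ≤ MM m (k + 1) → ∑ r ∈ range s, psi m (c * MM m (k + 1) + r) x
      = psi m (c * MM m (k + 1)) x * D m s x := by
    intro c s hs
    rw [D, mul_sum]
    apply sum_congr rfl
    intro i hi
    have := mem_range.mp hi
    rw [psi_add m hm c (k + 1) i (by omega)]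
  rw [D, sum_range_add, sum_blocks, key b r hr, sum_eq_zero, zero_add]
  intro c _
  rw [key c _ le_rfl, D_full m hm k x h hk, mul_zero]

lemma D_le (m : ℕ → ℕ) (hm : ∀ n, 2 ≤ m n) (n : ℕ) (x : G m) : ‖D m n x‖ ≤ n := by
  rw [D]
  refine (norm_sum_le _ _).trans ?_
  simp [psi_norm m hm]

lemma D_bound (m : ℕ → ℕ) (hm : ∀ n, 2 ≤ m n) (k : ℕ) (x : G m)
    (h : ∀ j < k, x j = 0) (hk : x k ≠ 0) (n : ℕ) : ‖D m n x‖ ≤ MM m (k + 1) := by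
  have hp := MM_pos m hm (k + 1)
  have h1 : n % MM m (k + 1) < MM m (k + 1) := Nat.mod_lt _ hp
  have h2 := D_block m hm k x h hk (n / MM m (k + 1)) (n % MM m (k + 1)) h1.le
  rw [Nat.div_add_mod'] at h2
  rw [h2, norm_mul, psi_norm m hm, one_mul]
  refine (D_le m hm _ x).trans ?_
  exact_mod_cast h1.le

lemma DS_bound (m : ℕ → ℕ) (hm : ∀ n, 2 ≤ m n) (k l : ℕ) (hkl : k < l) (x : G m)
    (h : ∀ j < k, x j = 0) (hk : x k ≠ 0) (h' : ∀ j < l, k < j → x j = 0) (hl : x l ≠ 0) (n : ℕ) :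
    ‖∑ j ∈ range n, D m j x‖ ≤ 2 * (MM m (k + 1) : ℝ) * MM m (l + 1) := by
  set L := MM m (k + 1) with hL
  have hp : 0 < L := MM_pos m hm (k + 1)
  have hpr : (0 : ℝ) < L := by exact_mod_cast hp
  have hLl : (L : ℝ) ≤ MM m (l + 1) := by exact_mod_cast MM_mono m hm (k + 1) (l + 1) (by omega)
  have h1 : n % L < L := Nat.mod_lt _ hp
  have hn : n = n / L * L + n % L := (Nat.div_add_mod' _ _).symm
  generalize n / L = b at hn
  generalize n % L = r at hn h1
  subst hn
  have e1 : ∀ s ≤ L, ‖∑ i ∈ range s, D m i x‖ ≤ (L : ℝ) * L := by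
    intro s hs
    refine (norm_sum_le _ _).trans ?_
    refine (sum_le_sum fun i _ => D_bound m hm k x h hk i).trans ?_
    rw [sum_const, card_range, nsmul_eq_mul, ← hL]
    have : (s : ℝ) ≤ L := by exact_mod_cast hs
    gcongr
  have key : ∀ c s, s ≤ L → ∑ i ∈ range s, D m (c * L + i) x
      = psi m (c * L) x * ∑ i ∈ range s, D m i x := by
    intro c s hs
    rw [mul_sum]
    apply sum_congr rfl
    intro i hi
    have := mem_range.mp hi
    exact D_block m hm k x h hk c i (by omega)
  -- the auxiliary point
  let y : G m := fun j => if j ≤ k then 0 else x j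
  have hy : ∀ j < l, y j = 0 := by
    intro j hj
    by_cases hjk : j ≤ k
    · simp [y, hjk]
    · simp only [y, hjk, if_false]; exact h' j hj (by omega)
  have hyl : y l ≠ 0 := by
    have : ¬ l ≤ k := by omega
    simpa [y, this] using hl
  have hD := D_bound m hm l y hy hyl (b * L)
  have hDe : D m (b * L) y = (L : ℂ) * ∑ c ∈ range b, psi m (c * L) x := by
    rw [D, sum_blocks, mul_sum]
    apply sum_congr rfl
    intro c _
    rw [sum_congr rfl (g := fun _ => psi m (c * L) x)]
    · simp
    · intro i hi
      rw [psi_add m hm c (k + 1) i (mem_range.mp hi), psi_low_one m hm i (k+1) (mem_range.mp hi) y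
        (fun j hj => hy j (by omega)), mul_one]
      apply psi_congr_high m hm
      intro j hj
      have : ¬ j ≤ k := by omega
      simp [y, this]
  rw [hDe, norm_mul, Complex.norm_natCast] at hD
  rw [sum_range_add, sum_blocks, key b r h1.le, sum_congr rfl (fun c _ => key c L le_rfl),
    ← sum_mul]
  refine (norm_add_le _ _).trans ?_
  rw [norm_mul, norm_mul, psi_norm m hm, one_mul]
  have e2 := e1 L le_rfl
  have e3 := e1 r h1.le
  have e4 : ‖∑ c ∈ range b, psi m (c * L) x‖ * ‖∑ i ∈ range L, D m i x‖ ≤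
      ‖∑ c ∈ range b, psi m (c * L) x‖ * ((L : ℝ) * L) := by gcongr
  nlinarith

lemma abel_bound (p : ℕ → ℝ) (hp0 : ∀ n, 0 ≤ p n) (hp : ∀ n, p (n + 1) ≤ p n) (e : ℕ → ℂ) (C : ℝ)
    (he : ∀ J, ‖∑ i ∈ range J, e i‖ ≤ C) (J : ℕ) :
    ‖∑ i ∈ range J, (p i : ℂ) * e i‖ ≤ p 0 * C := by
  have key : ∀ J, ‖∑ i ∈ range J, (p i : ℂ) * e i - (p J : ℂ) * ∑ i ∈ range J, e i‖
      ≤ (p 0 - p J) * C := by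
    intro J
    induction J with
    | zero => simp
    | succ J ih =>
      have : ∑ i ∈ range (J + 1), (p i : ℂ) * e i - (p (J + 1) : ℂ) * ∑ i ∈ range (J + 1), e i
        = (∑ i ∈ range J, (p i : ℂ) * e i - (p J : ℂ) * ∑ i ∈ range J, e i)
          + ((p J - p (J + 1) : ℝ) : ℂ) * ∑ i ∈ range (J + 1), e i := by
        rw [sum_range_succ, sum_range_succ]; push_cast; ring
      rw [this]
      refine (norm_add_le _ _).trans ?_
      rw [norm_mul, Complex.norm_real, Real.norm_eq_abs, abs_of_nonneg (sub_nonneg.mpr (hp J))]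
      have := mul_le_mul_of_nonneg_left (he (J + 1)) (sub_nonneg.mpr (hp J))
      linarith
  have h1 : ‖(p J : ℂ) * ∑ i ∈ range J, e i‖ ≤ p J * C := by
    rw [norm_mul, Complex.norm_real, Real.norm_eq_abs, abs_of_nonneg (hp0 J)]
    exact mul_le_mul_of_nonneg_left (he J) (hp0 J)
  have h2 := norm_sub_norm_le (∑ i ∈ range J, (p i : ℂ) * e i) ((p J : ℂ) * ∑ i ∈ range J, e i)
  have := key J
  linarith

lemma rev_sum (d : ℕ → ℂ) (hd : d 0 = 0) (n J : ℕ) :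
    ∑ i ∈ range J, d (n - i) = ∑ i ∈ range (n + 1), d i - ∑ i ∈ range (n + 1 - J), d i := by
  induction J with
  | zero => simp
  | succ J ih =>
    rw [sum_range_succ, ih]
    rcases le_or_gt J n with h | h
    · have : n + 1 - J = (n - J) + 1 := by omega
      rw [this, sum_range_succ _ (n - J)]
      have : n + 1 - (J + 1) = n - J := by omega
      rw [this]; ring
    · have h1 : n + 1 - J = 0 := by omega
      have h2 : n + 1 - (J + 1) = 0 := by omega
      have h3 : n - J = 0 := by omega
      rw [h1, h2, h3, hd]; simp

lemma icc_rev (q : ℕ → ℝ) (d : ℕ → ℂ) (n : ℕ) :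
    ∑ k ∈ Icc 1 n, (q (n - k) : ℂ) * d k = ∑ j ∈ range n, (q j : ℂ) * d (n - j) := by
  refine sum_bij' (fun k _ => n - k) (fun j _ => n - j) ?_ ?_ ?_ ?_ ?_
  · intro k hk; simp at hk ⊢; omega
  · intro k hk; simp at hk ⊢; omega
  · intro k hk; simp at hk ⊢; omega
  · intro k hk; simp at hk ⊢; omega
  · intro k hk
    have : n - (n - k) = k := by simp at hk; omega
    simp only [this]

lemma head_bound (q : ℕ → ℝ) (hq : ∀ n, 0 ≤ q n) (e : ℕ → ℂ) (A : ℝ) (he : ∀ i, ‖e i‖ ≤ A) (M : ℕ) :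
    ‖∑ j ∈ range M, (q j : ℂ) * e j‖ ≤ Q q M * A := by
  refine (norm_sum_le _ _).trans ?_
  rw [Q, sum_mul]
  apply sum_le_sum
  intro i _
  rw [norm_mul, Complex.norm_real, Real.norm_eq_abs, abs_of_nonneg (hq i)]
  exact mul_le_mul_of_nonneg_left (he i) (hq i)

lemma q_anti (q : ℕ → ℝ) (hqmono : ∀ n, q (n + 1) ≤ q n) : Antitone q := antitone_nat_of_succ_le hqmono

lemma mul_q_le (q : ℕ → ℝ) (hqmono : ∀ n, q (n + 1) ≤ q n) (M : ℕ) : (M : ℝ) * q M ≤ Q q M := by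
  rw [Q]
  have := card_nsmul_le_sum (range M) q (q M)
    (fun i hi => q_anti q hqmono (mem_range.mp hi).le)
  simpa using this

lemma W_bound (q : ℕ → ℝ) (hqnn : ∀ n, 0 ≤ q n) (hqmono : ∀ n, q (n + 1) ≤ q n)
    (d : ℕ → ℂ) (hd : d 0 = 0) (A S : ℝ) (hA : ∀ i, ‖d i‖ ≤ A)
    (hS : ∀ n, ‖∑ i ∈ range n, d i‖ ≤ S) (M n : ℕ) (hMn : M ≤ n) :
    ‖∑ k ∈ Icc 1 n, (q (n - k) : ℂ) * d k‖ ≤ Q q M * A + q M * (2 * S) := by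
  rw [icc_rev]
  obtain ⟨n', rfl⟩ := Nat.exists_eq_add_of_le hMn
  rw [sum_range_add]
  refine (norm_add_le _ _).trans (add_le_add (head_bound q hqnn _ A (fun i => hA _) M) ?_)
  have := abel_bound (fun i => q (M + i)) (fun i => hqnn _) (fun i => hqmono (M + i))
    (fun i => d (n' - i)) (2 * S) ?_ n'
  · simpa [Nat.add_sub_add_left] using this
  · intro J
    rw [rev_sum d hd]
    refine (norm_sub_le _ _).trans ?_
    have := hS (n' + 1)
    have := hS (n' + 1 - J)
    linarith

lemma Q_pos (q : ℕ → ℝ) (hq0 : 0 < q 0) (hqnn : ∀ n, 0 ≤ q n) (n : ℕ) (hn : 1 ≤ n) :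
    0 < Q q n := by
  rw [Q]
  refine lt_of_lt_of_le hq0 ?_
  exact single_le_sum (f := q) (fun i _ => hqnn i) (mem_range.mpr hn)

lemma Q_le (q : ℕ → ℝ) (hqmono : ∀ n, q (n + 1) ≤ q n) (n : ℕ) : Q q n ≤ n * q 0 := by
  have := sum_le_card_nsmul (range n) q (q 0) (fun i _ => q_anti q hqmono (Nat.zero_le i))
  simpa [Q] using this

/-- telescoping inequality for negative powers -/
lemma neg_pow_step (β : ℝ) (h0 : 0 < β) (h1 : β ≤ 1) (i : ℕ) (hi : 1 ≤ i) :
    (β / 2) * (i : ℝ) ^ (-β - 1) ≤ (i : ℝ) ^ (-β) - ((i + 1 : ℕ) : ℝ) ^ (-β) := by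
  have hi0 : (0 : ℝ) < i := by exact_mod_cast hi
  have hi1 : (1 : ℝ) ≤ i := by exact_mod_cast hi
  have hb := _root_.rpow_one_add_le_one_add_mul_self (s := -1 / (i + 1 : ℝ))
    (by rw [le_div_iff₀ (by positivity)]; linarith) h0.le h1
  have e : (1 + -1 / (i + 1 : ℝ)) = i / (i + 1 : ℝ) := by field_simp; ring
  rw [e, Real.div_rpow hi0.le (by positivity)] at hb
  have e2 : ((i + 1 : ℕ) : ℝ) ^ (-β) = (i : ℝ) ^ (-β) * ((i : ℝ) ^ β / (i + 1 : ℝ) ^ β) := by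
    push_cast
    rw [Real.rpow_neg (by positivity), Real.rpow_neg hi0.le]
    have : (i : ℝ) ^ β ≠ 0 := by positivity
    field_simp
  rw [e2, Real.rpow_sub_one hi0.ne']
  have hpos : (0 : ℝ) < (i : ℝ) ^ (-β) := by positivity
  have h3 : β / 2 * (1 / i) ≤ β / (i + 1 : ℝ) := by
    rw [div_mul_div_comm, div_le_div_iff₀ (by positivity) (by positivity)]
    nlinarith
  have h4 : β * (-1 / (i + 1 : ℝ)) = - (β / (i + 1 : ℝ)) := by ring
  rw [h4] at hb
  have h5 := mul_le_mul_of_nonneg_left (show β / 2 * (1 / i) ≤ 1 - (i : ℝ) ^ β / (i + 1 : ℝ) ^ β by linarith) hpos.le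
  calc β / 2 * ((i : ℝ) ^ (-β) / i) = (i : ℝ) ^ (-β) * (β / 2 * (1 / i)) := by ring
    _ ≤ _ := h5
    _ = _ := by ring

lemma pos_pow_step (α : ℝ) (h0 : 0 < α) (h1 : α ≤ 1) (i : ℕ) (hi : 1 ≤ i) :
    α / 2 * (i : ℝ) ^ (α - 1) ≤ ((i + 1 : ℕ) : ℝ) ^ α - (i : ℝ) ^ α := by
  have hi0 : (0 : ℝ) < i := by exact_mod_cast hi
  have hi1 : (1 : ℝ) ≤ i := by exact_mod_cast hi
  have hb := _root_.rpow_one_add_le_one_add_mul_self (s := -1 / (i + 1 : ℝ))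
    (by rw [le_div_iff₀ (by positivity)]; linarith) h0.le h1
  have e : (1 + -1 / (i + 1 : ℝ)) = i / (i + 1 : ℝ) := by field_simp; ring
  have hpos : (0 : ℝ) < (i + 1 : ℝ) ^ α := by positivity
  rw [e, Real.div_rpow hi0.le (by positivity), div_le_iff₀ hpos] at hb
  push_cast
  rw [Real.rpow_sub_one hi0.ne']
  have h2 : (i : ℝ) ^ α ≤ (i + 1 : ℝ) ^ α := by
    apply Real.rpow_le_rpow hi0.le (by linarith) h0.le
  have h3 : α / 2 * (1 / i) ≤ α / (i + 1 : ℝ) := by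
    rw [div_mul_div_comm, div_le_div_iff₀ (by positivity) (by positivity)]
    nlinarith
  have h4 : (α / 2 * (1 / i)) * (i : ℝ) ^ α ≤ α / (i + 1 : ℝ) * (i + 1 : ℝ) ^ α := by
    gcongr
  have h5 : (1 + α * (-1 / (i + 1 : ℝ))) * (i + 1 : ℝ) ^ α
     = (i + 1 : ℝ) ^ α - α / (i + 1 : ℝ) * (i + 1 : ℝ) ^ α := by ring
  rw [h5] at hb
  calc α / 2 * ((i : ℝ) ^ α / i) = (α / 2 * (1 / i)) * (i : ℝ) ^ α := by ring
    _ ≤ _ := by linarith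

lemma Q_upper (α : ℝ) (hα0 : 0 < α) (hα1 : α < 1)
    (q : ℕ → ℝ) (hq0 : 0 < q 0) (hqmono : ∀ n, q (n + 1) ≤ q n)
    (hinf : ∀ δ > 0, ∃ n, q n < δ)
    (C : ℝ) (hC : ∀ n : ℕ, 1 ≤ n → q n - q (n + 1) ≤ C * (n : ℝ) ^ (α - 2)) :
    ∃ E, ∀ M : ℕ, 1 ≤ M → Q q M ≤ E * (M : ℝ) ^ α := by
  have hC0 : 0 ≤ C := by
    have := hC 1 le_rfl
    have := hqmono 1
    simp at *; linarith
  set β := 1 - α with hβ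
  have hβ0 : 0 < β := by linarith
  set C' := C * (2 / β) with hC'
  have hC'0 : 0 ≤ C' := by positivity
  have step : ∀ n : ℕ, 1 ≤ n → q n - C' * (n : ℝ) ^ (α - 1)
      ≤ q (n + 1) - C' * ((n + 1 : ℕ) : ℝ) ^ (α - 1) := by
    intro n hn
    have h1 := neg_pow_step β hβ0 (by linarith) n hn
    have h2 := hC n hn
    have e1 : -β - 1 = α - 2 := by rw [hβ]; ring
    have e2 : -β = α - 1 := by rw [hβ]; ring
    rw [e1, e2] at h1
    have h3 := mul_le_mul_of_nonneg_left h1 hC'0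
    have h4 : C' * (β / 2 * (n : ℝ) ^ (α - 2)) = C * (n : ℝ) ^ (α - 2) := by
      rw [hC']; field_simp
    rw [h4, mul_sub] at h3
    linarith
  have mono : ∀ n : ℕ, 1 ≤ n → ∀ K, n ≤ K → q n - C' * (n : ℝ) ^ (α - 1)
      ≤ q K - C' * (K : ℝ) ^ (α - 1) := by
    intro n hn K hK
    induction K, hK using Nat.le_induction with
    | base => exact le_rfl
    | succ K hK ih => exact ih.trans (step K (hn.trans hK))
  have hqn : ∀ n : ℕ, 1 ≤ n → q n ≤ C' * (n : ℝ) ^ (α - 1) := by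
    intro n hn
    refine le_of_forall_pos_le_add fun δ hδ => ?_
    obtain ⟨K, hK⟩ := hinf δ hδ
    have h1 := mono n hn (max n K) (le_max_left _ _)
    have h2 := q_anti q hqmono (le_max_right n K)
    have h3 : 0 ≤ C' * ((max n K : ℕ) : ℝ) ^ (α - 1) := by positivity
    linarith
  refine ⟨q 0 + C' * (2 / α), fun M hM => ?_⟩
  induction M, hM using Nat.le_induction with
  | base =>
    simp [Q]
    positivity
  | succ M hM ih =>
    have h1 := hqn M hM
    have h2 := pos_pow_step α hα0 hα1.le M hM
    rw [Q, sum_range_succ]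
    rw [Q] at ih
    have h3 := mul_le_mul_of_nonneg_left h2 (show 0 ≤ C' * (2 / α) by positivity)
    have h4 : C' * (2 / α) * (α / 2 * (M : ℝ) ^ (α - 1)) = C' * (M : ℝ) ^ (α - 1) := by
      field_simp
    have h5 : (M : ℝ) ^ α ≤ ((M + 1 : ℕ) : ℝ) ^ α :=
      Real.rpow_le_rpow (by positivity) (by push_cast; linarith) hα0.le
    rw [h4] at h3
    nlinarith

lemma Q_ratio (α : ℝ) (hα0 : 0 < α) (hα1 : α ≤ 1)
    (q : ℕ → ℝ) (hq0 : 0 < q 0) (hqnn : ∀ n, 0 ≤ q n) (hqmono : ∀ n, q (n + 1) ≤ q n)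
    (hQ : (fun n : ℕ => (n : ℝ) ^ α / Q q n) =O[atTop] (fun _ => (1 : ℝ)))
    (hq' : (fun n : ℕ => (q n - q (n + 1)) / (n : ℝ) ^ (α - 2)) =O[atTop] (fun _ => (1 : ℝ))) :
    ∃ E, 0 ≤ E ∧ ∀ M n : ℕ, 1 ≤ M → M ≤ n → Q q M / Q q n ≤ E * ((M : ℝ) ^ α / (n : ℝ) ^ α) := by
  obtain ⟨C1, hC1⟩ := isBigO_one_nat_atTop_iff.mp hQ
  obtain ⟨C2, hC2⟩ := isBigO_one_nat_atTop_iff.mp hq'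
  by_cases hinf : ∀ δ > 0, ∃ n, q n < δ
  · have hE : ∃ E, ∀ M : ℕ, 1 ≤ M → Q q M ≤ E * (M : ℝ) ^ α := by
      rcases eq_or_lt_of_le hα1 with h1 | h1
      · refine ⟨q 0, fun M _ => ?_⟩
        rw [h1, Real.rpow_one, mul_comm]
        exact Q_le q hqmono M
      · refine Q_upper α hα0 h1 q hq0 hqmono hinf C2 fun n hn => ?_
        have hn0 : (0 : ℝ) < n := by exact_mod_cast hn
        have := (le_abs_self _).trans (hC2 n)
        rwa [div_le_iff₀ (by positivity)] at this
    obtain ⟨E, hE⟩ := hE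
    have hE0 : 0 ≤ E := by
      have := hE 1 le_rfl
      have h2 := Q_pos q hq0 hqnn 1 le_rfl
      simp at this; linarith
    have hC10 : 0 ≤ C1 := (norm_nonneg _).trans (hC1 0)
    refine ⟨E * C1, by positivity, fun M n hM hn => ?_⟩
    have hQn := Q_pos q hq0 hqnn n (hM.trans hn)
    have hn0 : (0 : ℝ) < n := by exact_mod_cast (hM.trans hn)
    have hna : (0 : ℝ) < (n : ℝ) ^ α := by positivity
    have h1 := (le_abs_self _).trans (hC1 n)
    rw [div_le_iff₀ hQn] at h1
    rw [← mul_div_assoc, div_le_div_iff₀ hQn hna]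
    calc Q q M * (n : ℝ) ^ α ≤ (E * (M : ℝ) ^ α) * (C1 * Q q n) := by
          apply mul_le_mul (hE M hM) h1 hna.le (by positivity)
      _ = _ := by ring
  · push Not at hinf
    obtain ⟨δ, hδ, hq⟩ := hinf
    refine ⟨q 0 / δ, by positivity, fun M n hM hn => ?_⟩
    have hQn := Q_pos q hq0 hqnn n (hM.trans hn)
    have hn0 : (0 : ℝ) < n := by exact_mod_cast (hM.trans hn)
    have hM0 : (0 : ℝ) < M := by exact_mod_cast hM
    have h1 := Q_le q hqmono M
    have h2 : (n : ℝ) * δ ≤ Q q n := by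
      have := card_nsmul_le_sum (range n) q δ (fun i _ => hq i)
      simpa [Q] using this
    calc Q q M / Q q n ≤ (M * q 0) / (n * δ) := by
          apply div_le_div₀ (by positivity) h1 (by positivity) h2
      _ = q 0 / δ * ((M : ℝ) / n) := by field_simp
      _ ≤ q 0 / δ * ((M : ℝ) / n) ^ α := by
          gcongr
          apply Real.self_le_rpow_of_le_one (by positivity) _ hα1
          rw [div_le_one hn0]; exact_mod_cast hn
      _ = _ := by rw [Real.div_rpow hM0.le hn0.le]

lemma psi_meas (m : ℕ → ℕ) (n : ℕ) : Measurable (psi m n) := by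
  unfold psi
  apply Finset.measurable_prod
  intro k _
  apply Measurable.pow_const
  unfold rade
  exact (measurable_from_top (f := fun z : ZMod (m k) =>
    Complex.exp (2 * Real.pi * Complex.I * (z.val : ℂ) / (m k : ℂ)))).comp (measurable_pi_apply k)

lemma fT_eq (m : ℕ → ℕ) (hm : ∀ n, 2 ≤ m n) (μ : Measure (G m)) (q : ℕ → ℝ) (a : G m → ℂ)
    (ha : Integrable a μ) (n : ℕ) (x : G m) :
    fT m q μ a n x = ∫ t, a t * F m q n (x - t) ∂μ := by
  have hi : ∀ i, Integrable (fun t => a t * psi m i (x - t)) μ := by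
    intro i
    refine ha.mul_bdd (c := 1) ?_ ?_
    · have : (fun t => psi m i (x - t)) = fun t => psi m i x * (starRingEnd ℂ) (psi m i t) := by
        funext t; exact psi_sub m hm i x t
      rw [this]
      exact ((Complex.continuous_conj.measurable.comp (psi_meas m i)).const_mul _).aestronglyMeasurable
    · exact Eventually.of_forall fun t => (psi_norm m hm i _).le
  have hS : ∀ k, fS m μ a k x = ∫ t, a t * D m k (x - t) ∂μ := by
    intro k
    simp only [D, mul_sum]
    rw [integral_finsetSum _ (fun i _ => hi i), fS]
    apply sum_congr rfl
    intro i _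
    rw [fcoef, ← integral_mul_const]
    congr 1; funext t
    rw [psi_sub m hm]; ring
  have hD : ∀ k, Integrable (fun t => a t * D m k (x - t)) μ := by
    intro k
    simp only [D, mul_sum]
    exact integrable_finsetSum _ (fun i _ => hi i)
  have e : ∀ t, a t * F m q n (x - t) = ((Q q n : ℝ) : ℂ)⁻¹ *
      ∑ k ∈ Icc 1 n, (q (n - k) : ℂ) * (a t * D m k (x - t)) := by
    intro t
    rw [F, mul_left_comm, mul_sum (Icc 1 n) _ (a t)]
    congr 1
    apply sum_congr rfl
    intro k _; ring
  simp only [e]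
  rw [integral_const_mul, integral_finsetSum _ (fun k _ => (hD k).const_mul _), fT]
  congr 1
  apply sum_congr rfl
  intro k _
  rw [hS, integral_const_mul]

lemma cyl_meas (m : ℕ → ℕ) (n : ℕ) (x : G m) : MeasurableSet (cyl m n x) := by
  have : cyl m n x = ⋂ j ∈ Set.Iio n, (fun y : G m => y j) ⁻¹' {x j} := by
    ext y; simp [cyl]
  rw [this]
  exact MeasurableSet.biInter (Set.to_countable _) fun j _ =>
    measurable_pi_apply j (MeasurableSet.singleton _)

lemma fT_bound (m : ℕ → ℕ) (hm : ∀ n, 2 ≤ m n) (μ : Measure (G m)) [IsProbabilityMeasure μ]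
    (hμ : ∀ (n : ℕ) (x : G m), μ (cyl m n x) = ((MM m n : ℝ≥0∞))⁻¹)
    (α : ℝ) (q : ℕ → ℝ) (N : ℕ) (a : G m → ℂ) (ham : Measurable a)
    (hs : Function.support a ⊆ cyl m N 0)
    (hb : eLpNorm a ⊤ μ ≤ ENNReal.ofReal ((MM m N : ℝ) ^ (1 + α))) (n : ℕ) (x : G m) (A : ℝ)
    (hA : ∀ t ∈ cyl m N 0, ‖F m q n (x - t)‖ ≤ A) :
    ‖fT m q μ a n x‖ ≤ A * (MM m N : ℝ) ^ α := by
  have hM : (0 : ℝ) < MM m N := by exact_mod_cast MM_pos m hm N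
  have hae : ∀ᵐ t ∂μ, ‖a t‖ ≤ (MM m N : ℝ) ^ (1 + α) := by
    rw [eLpNorm_exponent_top] at hb
    filter_upwards [ae_le_eLpNormEssSup (f := a) (μ := μ)] with t ht
    have := ht.trans hb
    rwa [← ofReal_norm, ENNReal.ofReal_le_ofReal_iff (by positivity)] at this
  have hint : Integrable a μ := Integrable.of_bound ham.aestronglyMeasurable _ hae
  have h0 : (0 : G m) ∈ cyl m N 0 := fun j _ => rfl
  have hA0 : 0 ≤ A := (norm_nonneg _).trans (hA 0 h0)
  rw [fT_eq m hm μ q a hint, ← setIntegral_eq_integral_of_forall_compl_eq_zero (s := cyl m N 0)]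
  · refine (norm_setIntegral_le_of_norm_le_const_ae' (C := (MM m N : ℝ) ^ (1 + α) * A)
      (measure_lt_top _ _) ?_).trans ?_
    · filter_upwards [hae] with t ht hts
      rw [norm_mul]
      exact mul_le_mul ht (hA t hts) (norm_nonneg _) (by positivity)
    · rw [Measure.real, hμ, ENNReal.toReal_inv, ENNReal.toReal_natCast, Real.rpow_add hM,
        Real.rpow_one]
      apply le_of_eq
      field_simp
  · intro t ht
    have : a t = 0 := by
      by_contra h
      exact ht (hs h)
    rw [this, zero_mul]

lemma spike_ne (M s : ℕ) (hM : 2 ≤ M) (h1 : 1 ≤ s) (h2 : s ≤ M - 1) : (s : ZMod M) ≠ 0 := by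
  rw [Ne, ZMod.natCast_eq_zero_iff]
  intro h
  have := Nat.le_of_dvd h1 h
  omega


/-- Let `0 < α ≤ 1`, let `{q_n}` be a non-increasing sequence of
non-negative reals with `q_0 > 0` satisfying `n^α/Q_n = O(1)` and
`(q_n - q_{n+1})/n^{α-2} = O(1)`, and let `a` be a `1/(1+α)`-atom with support `I_N`. Then
there is a constant `c_α` such that for every `n > M_N`:
(i) `|t_n a(x)| ≤ c_α M_l^α M_k M_N^α / n^α` for `x ∈ I_{l+1}(s_k e_k + s_l e_l)`,
`0 ≤ k < l < N`, `1 ≤ s_k ≤ m_k - 1`, `1 ≤ s_l ≤ m_l - 1`; and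
(ii) `|t_n a(x)| ≤ c_α M_k M_N^α` for `x ∈ I_N(s_k e_k)`, `0 ≤ k < N`,
`1 ≤ s_k ≤ m_k - 1`. -/
theorem statement11
    (m : ℕ → ℕ) (hm : ∀ n, 2 ≤ m n) (hmb : ∃ B, ∀ n, m n ≤ B)
    (μ : Measure (G m)) [IsProbabilityMeasure μ]
    (hμ : ∀ (n : ℕ) (x : G m), μ (cyl m n x) = ((MM m n : ℝ≥0∞))⁻¹)
    (α : ℝ) (hα0 : 0 < α) (hα1 : α ≤ 1)
    (q : ℕ → ℝ) (hq0 : 0 < q 0) (hqnn : ∀ n, 0 ≤ q n) (hqmono : ∀ n, q (n + 1) ≤ q n)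
    (hQ : (fun n : ℕ => (n : ℝ) ^ α / Q q n) =O[atTop] (fun _ => (1 : ℝ)))
    (hq' : (fun n : ℕ => (q n - q (n + 1)) / (n : ℝ) ^ (α - 2)) =O[atTop] (fun _ => (1 : ℝ))) :
    ∃ c : ℝ, ∀ N : ℕ, ∀ a : G m → ℂ, Measurable a →
      Function.support a ⊆ cyl m N 0 →
      (∫ x in cyl m N 0, a x ∂μ) = 0 →
      eLpNorm a ⊤ μ ≤ ENNReal.ofReal ((MM m N : ℝ) ^ (1 + α)) →
      ∀ n : ℕ, MM m N < n →
        ((∀ k l : ℕ, k < l → l < N → ∀ sk sl : ℕ,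
            1 ≤ sk → sk ≤ m k - 1 → 1 ≤ sl → sl ≤ m l - 1 →
            ∀ x ∈ cyl m (l + 1) (twoSpike m k sk l sl),
              ‖fT m q μ a n x‖ ≤
                c * (MM m l : ℝ) ^ α * (MM m k : ℝ) * (MM m N : ℝ) ^ α / (n : ℝ) ^ α) ∧
          (∀ k : ℕ, k < N → ∀ sk : ℕ, 1 ≤ sk → sk ≤ m k - 1 →
            ∀ x ∈ cyl m N (oneSpike m k sk),
              ‖fT m q μ a n x‖ ≤ c * (MM m k : ℝ) * (MM m N : ℝ) ^ α)) := by
  obtain ⟨B, hB⟩ := hmb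
  obtain ⟨E, hE0, hE⟩ := Q_ratio α hα0 hα1 q hq0 hqnn hqmono hQ hq'
  refine ⟨(B + 4 * B * B) * E + B, ?_⟩
  intro N a ham hs _ hb n hn
  have hMN := MM_pos m hm N
  have hQn : 0 < Q q n := Q_pos q hq0 hqnn n (by omega)
  have hMB : ∀ k, (MM m (k + 1) : ℝ) ≤ B * MM m k := by
    intro k
    have := Nat.mul_le_mul_right (MM m k) (hB k)
    simp only [MM]
    exact_mod_cast this
  have hFn : ∀ y : G m, ‖F m q n y‖ =
      ‖∑ k ∈ Finset.Icc 1 n, (q (n - k) : ℂ) * D m k y‖ / Q q n := by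
    intro y
    rw [F, norm_mul, norm_inv, Complex.norm_real, Real.norm_eq_abs, abs_of_pos hQn, inv_mul_eq_div]
  refine ⟨?_, ?_⟩
  · intro k l hkl hlN sk sl hsk hsk' hsl hsl' x hx
    have hMl := MM_pos m hm l
    have hln : MM m l ≤ n := (MM_mono m hm l N hlN.le).trans hn.le
    have hn0 : (0 : ℝ) < n := by exact_mod_cast (show 0 < n by omega)
    have hkey := fT_bound m hm μ hμ α q N a ham hs hb n x
      ((B + 4 * B * B) * MM m k * (E * ((MM m l : ℝ) ^ α / (n : ℝ) ^ α))) ?_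
    · refine hkey.trans ?_
      have : (B + 4 * B * B) * (MM m k : ℝ) * (E * ((MM m l : ℝ) ^ α / (n : ℝ) ^ α)) *
          (MM m N : ℝ) ^ α = ((B + 4 * B * B) * E) * (MM m l : ℝ) ^ α * (MM m k : ℝ) *
          (MM m N : ℝ) ^ α / (n : ℝ) ^ α := by ring
      rw [this]
      gcongr
      have : (0 : ℝ) ≤ B := by positivity
      linarith
    · intro t ht
      have hy : ∀ j ≤ l, (x - t) j = twoSpike m k sk l sl j := by
        intro j hj
        rw [Pi.sub_apply, hx j (by omega), ht j (by omega)]; simp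
      have y1 : ∀ j < k, (x - t) j = 0 := by
        intro j hj
        rw [hy j (by omega), twoSpike, if_neg (by omega), if_neg (by omega)]
      have y2 : (x - t) k ≠ 0 := by
        rw [hy k (by omega), twoSpike, if_pos rfl]
        exact spike_ne _ _ (hm k) hsk hsk'
      have y3 : ∀ j < l, k < j → (x - t) j = 0 := by
        intro j hj hj'
        rw [hy j (by omega), twoSpike, if_neg (by omega), if_neg (by omega)]
      have y4 : (x - t) l ≠ 0 := by
        rw [hy l (by omega), twoSpike, if_neg (by omega), if_pos rfl]
        exact spike_ne _ _ (hm l) hsl hsl'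
      have hW := W_bound q hqnn hqmono (fun i => D m i (x - t)) (by simp [D])
        (MM m (k + 1)) _ (D_bound m hm k _ y1 y2) (DS_bound m hm k l hkl _ y1 y2 y3 y4)
        (MM m l) n hln
      have hW2 : ‖∑ k ∈ Finset.Icc 1 n, (q (n - k) : ℂ) * D m k (x - t)‖ ≤
          (B + 4 * B * B) * MM m k * Q q (MM m l) := by
        refine hW.trans ?_
        have g1 := mul_q_le q hqmono (MM m l)
        have g2 := hMB k
        have g3 := hMB l
        have g4 := Q_pos q hq0 hqnn (MM m l) hMl
        have g5 : q (MM m l) * (2 * (2 * (MM m (k + 1) : ℝ) * MM m (l + 1))) ≤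
            q (MM m l) * (2 * (2 * (B * MM m k) * (B * MM m l))) := by
          have := hqnn (MM m l)
          gcongr
        have g6 : Q q (MM m l) * (MM m (k + 1) : ℝ) ≤ Q q (MM m l) * (B * MM m k) := by gcongr
        have g7 := mul_le_mul_of_nonneg_left g1
          (show (0 : ℝ) ≤ 4 * B * B * MM m k by positivity)
        nlinarith
      rw [hFn]
      calc _ ≤ (B + 4 * B * B) * MM m k * Q q (MM m l) / Q q n := by gcongr
        _ = (B + 4 * B * B) * MM m k * (Q q (MM m l) / Q q n) := by ring
        _ ≤ _ := by
          have := hE (MM m l) n hMl hln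
          gcongr
  · intro k hkN sk hsk hsk' x hx
    have hkey := fT_bound m hm μ hμ α q N a ham hs hb n x (B * MM m k) ?_
    · refine hkey.trans ?_
      gcongr
      have : 0 ≤ ((B : ℝ) + 4 * B * B) * E := by positivity
      linarith
    · intro t ht
      have hy : ∀ j < N, (x - t) j = oneSpike m k sk j := by
        intro j hj
        rw [Pi.sub_apply, hx j (by omega), ht j (by omega)]; simp
      have y1 : ∀ j < k, (x - t) j = 0 := by
        intro j hj
        rw [hy j (by omega), oneSpike, if_neg (by omega)]
      have y2 : (x - t) k ≠ 0 := by
        rw [hy k (by omega), oneSpike, if_pos rfl]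
        exact spike_ne _ _ (hm k) hsk hsk'
      rw [hFn, icc_rev, div_le_iff₀ hQn, mul_comm]
      exact head_bound q hqnn _ _ (fun i => (D_bound m hm k _ y1 y2 _).trans (hMB k)) n

end Vilenkin
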